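/- A strongly connected signed digraph that is cycle balanced is balanced; that is, if every directed cycle of a strongly connected signed digraph (D, σ) is positive, then every circle of its underlying undirected signed graph is positive. -/

import Mathlib

/-- Sign of the walk from `a` to `z` with interior vertices given by the list. -/
def walkSign {V : Type*} (σ : V → V → ℤˣ) : V → List V → V → ℤˣ
  | a, [], z => σ a z
  | a, b :: t, z => σ a b * walkSign σ b t z

/-- Being a (nonempty) directed walk from `a` to `z` with the given interior vertices. -/
def IsDWalk {V : Type*} (D : V → V → Prop) : V → List V → V → Prop
  | a, [], z => D a z
  | a, b :: t, z => D a b ∧ IsDWalk D b t z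

theorem walkSign_append {V : Type*} (σ : V → V → ℤˣ) (s : List V) :
    ∀ (a b : V) (t : List V) (z : V),
      walkSign σ a (s ++ b :: t) z = walkSign σ a s b * walkSign σ b t z := by
  induction s with
  | nil => intros; simp [walkSign]
  | cons c s ih => intros; simp [walkSign, ih, mul_assoc]

theorem isDWalk_append {V : Type*} (D : V → V → Prop) (s : List V) :
    ∀ (a b : V) (t : List V) (z : V),
      IsDWalk D a (s ++ b :: t) z ↔ IsDWalk D a s b ∧ IsDWalk D b t z := by
  induction s with
  | nil => intros; simp [IsDWalk]
  | cons c s ih => intros; simp [IsDWalk, ih, and_assoc]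

theorem walkSign_zip {V : Type*} (σ : V → V → ℤˣ) (t : List V) : ∀ (a z : V),
    (((a :: t).zip (t ++ [z])).map fun p => σ p.1 p.2).prod = walkSign σ a t z := by
  induction t with
  | nil => intros; simp [walkSign]
  | cons c s ih =>
    intro a z
    have := ih c z
    simp only [List.cons_append, List.zip_cons_cons, List.map_cons, List.prod_cons] at this ⊢
    rw [this]; rfl

theorem isDWalk_zip {V : Type*} (D : V → V → Prop) (t : List V) : ∀ (a z : V),
    IsDWalk D a t z → ∀ p ∈ (a :: t).zip (t ++ [z]), D p.1 p.2 := by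
  induction t with
  | nil => intro a z h; simpa [IsDWalk] using h
  | cons c s ih =>
    intro a z h p hp
    rw [List.cons_append, List.zip_cons_cons, List.mem_cons] at hp
    rcases hp with rfl | hp
    · exact h.1
    · exact ih c z h.2 p hp

theorem exists_dup {V : Type*} (l : List V) (h : ¬ l.Nodup) :
    ∃ (x : V) (A B C : List V), l = A ++ x :: (B ++ x :: C) := by
  induction l with
  | nil => simp at h
  | cons a l ih =>
    by_cases ha : a ∈ l
    · obtain ⟨B, C, rfl⟩ := List.append_of_mem ha
      exact ⟨a, [], B, C, rfl⟩
    · have : ¬ l.Nodup := fun hn => h (List.nodup_cons.2 ⟨ha, hn⟩)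
      obtain ⟨x, A, B, C, rfl⟩ := ih this
      exact ⟨x, a :: A, B, C, rfl⟩

theorem closed_walk_pos {V : Type*} (D : V → V → Prop) (σ : V → V → ℤˣ)
    (hcycbal : ∀ l : List V, l ≠ [] → l.Nodup →
      (∀ p ∈ l.zip (l.rotate 1), D p.1 p.2) →
      ((l.zip (l.rotate 1)).map fun p => σ p.1 p.2).prod = 1) (n : ℕ) :
    ∀ (a : V) (t : List V), t.length < n → IsDWalk D a t a → walkSign σ a t a = 1 := by
  induction n with
  | zero => intro a t h; omega
  | succ n ih =>
    intro a t hlen hw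
    by_cases hn : (a :: t).Nodup
    · have hr : (a :: t).rotate 1 = t ++ [a] := by simp
      have := hcycbal (a :: t) (by simp) hn (by rw [hr]; exact isDWalk_zip D t a a hw)
      rw [hr, walkSign_zip] at this
      exact this
    · obtain ⟨x, A, B, C, h⟩ := exists_dup _ hn
      cases A with
      | nil =>
        simp only [List.nil_append, List.cons.injEq] at h
        obtain ⟨rfl, rfl⟩ := h
        simp at hlen
        rw [isDWalk_append] at hw
        rw [walkSign_append, ih a B (by omega) hw.1, ih a C (by omega) hw.2, one_mul]
      | cons b A =>
        simp only [List.cons_append, List.cons.injEq] at h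
        obtain ⟨rfl, rfl⟩ := h
        simp at hlen
        rw [isDWalk_append, isDWalk_append] at hw
        have h1 := ih x B (by omega) hw.2.1
        have h2 := ih a (A ++ x :: C) (by simp; omega)
          ((isDWalk_append D _ _ _ _ _).2 ⟨hw.1, hw.2.2⟩)
        rw [walkSign_append] at h2
        rw [walkSign_append, walkSign_append, h1, one_mul, h2]

/-- There is a possibly empty walk from `u` to `v` of sign `s`. -/
def HasWalk {V : Type*} (D : V → V → Prop) (σ : V → V → ℤˣ) (u v : V) (s : ℤˣ) : Prop :=
  (u = v ∧ s = 1) ∨ ∃ t, IsDWalk D u t v ∧ walkSign σ u t v = s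

theorem HasWalk.trans {V : Type*} {D : V → V → Prop} {σ : V → V → ℤˣ} {u v w : V} {s r : ℤˣ}
    (h : HasWalk D σ u v s) (h' : HasWalk D σ v w r) : HasWalk D σ u w (s * r) := by
  rcases h with ⟨rfl, rfl⟩ | ⟨t, ht, rfl⟩
  · simpa using h'
  · rcases h' with ⟨rfl, rfl⟩ | ⟨t', ht', rfl⟩
    · exact Or.inr ⟨t, ht, by simp⟩
    · exact Or.inr ⟨t ++ v :: t', (isDWalk_append D _ _ _ _ _).2 ⟨ht, ht'⟩,
        walkSign_append σ _ _ _ _ _⟩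

theorem HasWalk.single {V : Type*} {D : V → V → Prop} {σ : V → V → ℤˣ} {u v : V}
    (h : D u v) : HasWalk D σ u v (σ u v) := Or.inr ⟨[], h, rfl⟩

theorem exists_potential {V : Type*} (D : V → V → Prop) (σ : V → V → ℤˣ)
    (hstrong : ∀ u v : V, Relation.ReflTransGen D u v)
    (hcycbal : ∀ l : List V, l ≠ [] → l.Nodup →
      (∀ p ∈ l.zip (l.rotate 1), D p.1 p.2) →
      ((l.zip (l.rotate 1)).map fun p => σ p.1 p.2).prod = 1) :
    ∃ f : V → ℤˣ, ∀ u v, D u v → σ u v = f u * f v := by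
  have hex : ∀ u v, ∃ s, HasWalk D σ u v s := by
    intro u v
    induction hstrong u v with
    | refl => exact ⟨1, Or.inl ⟨rfl, rfl⟩⟩
    | tail _ h ih =>
      obtain ⟨s, hs⟩ := ih
      exact ⟨_, hs.trans (HasWalk.single h)⟩
  have hcl : ∀ u s, HasWalk D σ u u s → s = 1 := by
    rintro u s (⟨-, h⟩ | ⟨t, ht, rfl⟩)
    · exact h
    · exact closed_walk_pos D σ hcycbal _ u t (Nat.lt_succ_self _) ht
  rcases isEmpty_or_nonempty V with hV | ⟨⟨r⟩⟩
  · exact ⟨fun _ => 1, fun u => (hV.false u).elim⟩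
  choose f hf using hex r
  refine ⟨f, fun u v h => ?_⟩
  obtain ⟨g, hg⟩ := hex v r
  have h1 := hcl _ _ ((hf v).trans hg)
  have h2 := hcl _ _ (((hf u).trans (HasWalk.single h)).trans hg)
  have h3 : f u * σ u v = f v := mul_right_cancel (h2.trans h1.symm)
  rw [← h3, ← mul_assoc, Int.units_mul_self, one_mul]

theorem prod_potential {V : Type*} (f : V → ℤˣ) (l : List V) :
    ∀ (m : List V) (s : List ℤˣ), m.length = l.length → s.length = l.length →
      (∀ q ∈ (l.zip m).zip s, q.2 = f q.1.1 * f q.1.2) →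
      s.prod = (l.map f).prod * (m.map f).prod := by
  induction l with
  | nil =>
    intro m s hm hs _
    simp at hm hs
    simp [hm, hs]
  | cons a l ih =>
    rintro (_ | ⟨b, m⟩) (_ | ⟨c, s⟩) hm hs h
    · simp at hm
    · simp at hm
    · simp at hs
    · simp only [List.zip_cons_cons, List.mem_cons, forall_eq_or_imp] at h
      have := ih m s (by simpa using hm) (by simpa using hs) h.2
      simp only [List.prod_cons, List.map_cons, this, h.1]
      exact mul_mul_mul_comm _ _ _ _

/-- Harary et al.: a strongly connected signed digraph that is cycle balanced (every
directed cycle is positive) is balanced (every circle of the underlying undirected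
signed graph is positive).

A digraph on `V` is given by its arc relation `D` with arc signs `σ`.  A directed cycle
is given by a nonempty duplicate-free list of vertices, consecutive ones (cyclically,
via `l.zip (l.rotate 1)`) joined by arcs of `D`.  The circles of the underlying
undirected signed graph are: loops; digons, consisting of a pair of opposite arcs
between two vertices; and circles of length at least 3, given by a duplicate-free
vertex list where each cyclically consecutive pair is joined by an arc of `D` used in
either direction, the sign of each step being the sign of the arc used. -/
theorem strongly_connected_cycle_balanced_is_balanced {V : Type*}
    (D : V → V → Prop) (σ : V → V → ℤˣ)
    (hstrong : ∀ u v : V, Relation.ReflTransGen D u v)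
    (hcycbal : ∀ l : List V, l ≠ [] → l.Nodup →
      (∀ p ∈ l.zip (l.rotate 1), D p.1 p.2) →
      ((l.zip (l.rotate 1)).map fun p => σ p.1 p.2).prod = 1) :
    (∀ v : V, D v v → σ v v = 1) ∧
    (∀ u v : V, u ≠ v → D u v → D v u → σ u v * σ v u = 1) ∧
    (∀ l : List V, 3 ≤ l.length → l.Nodup → ∀ s : List ℤˣ, s.length = l.length →
      (∀ q ∈ (l.zip (l.rotate 1)).zip s,
        (D q.1.1 q.1.2 ∧ q.2 = σ q.1.1 q.1.2) ∨
        (D q.1.2 q.1.1 ∧ q.2 = σ q.1.2 q.1.1)) →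
      s.prod = 1) := by
  obtain ⟨f, hf⟩ := exists_potential D σ hstrong hcycbal
  refine ⟨fun v h => ?_, fun u v _ h h' => ?_, fun l _ _ s hs h => ?_⟩
  · rw [hf v v h, Int.units_mul_self]
  · rw [hf u v h, hf v u h', mul_comm (f v), Int.units_mul_self]
  · rw [prod_potential f l (l.rotate 1) s (by simp) hs ?_]
    · rw [((l.rotate_perm 1).map f).prod_eq, Int.units_mul_self]
    · intro q hq
      rcases h q hq with ⟨hd, e⟩ | ⟨hd, e⟩
      · rw [e, hf _ _ hd]
      · rw [e, hf _ _ hd, mul_comm]
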